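/- Let δ > 0 and assume the L² estimate: there is C_E > 0 such that ∫_{B(0,1/t)} |𝐄(ξ,y)|² dw(ξ) ≤ C_E / w(B(y,t)) for all t > 0 and y ∈ ℝ^N. Then there is a constant C₁ > 0, depending only on δ, N, R, k, such that for all f ∈ L¹(dw), all g ∈ L¹(dw) with |𝓕g(ξ)| ≤ (1+‖ξ‖)^{−𝐍−δ} for all ξ, and all x, y ∈ ℝ^N: |(f∗g)(x,y)| ≤ C₁ w(B(x,1))^{−1/2} w(B(y,1))^{−1/2} ‖f‖_{L¹(dw)}, where (f∗g)(x,y) := c_k^{-1} ∫ 𝐄(ξ,x) conj(𝐄(ξ,y)) 𝓕f(ξ) 𝓕g(ξ) dw(ξ). -/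

import Mathlib

open MeasureTheory Metric Complex
open scoped BigOperators ENNReal RealInnerProductSpace

noncomputable section

/-- `ℝ^N` with the Euclidean inner product. -/
abbrev V (N : ℕ) := EuclideanSpace ℝ (Fin N)

variable {N : ℕ}

/-- The reflection `σ_α(x) = x − (2⟨x,α⟩/‖α‖²) α`. -/
def sigma' (α x : V N) : V N := x - (2 * ⟪x, α⟫ / ‖α‖ ^ 2) • α

/-- `R` is a normalized root system: `0 ∉ R`, `‖α‖² = 2`, `σ_α(R) = R`,
and `R ∩ ℝα = {±α}` for every `α ∈ R`. -/
structure IsNRS {N : ℕ} (R : Finset (V N)) : Prop where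
  ne_zero : (0 : V N) ∉ R
  normSq : ∀ α ∈ R, ‖α‖ ^ 2 = 2
  reflMem : ∀ α ∈ R, ∀ β ∈ R, sigma' α β ∈ R
  two : ∀ α ∈ R, ∀ β ∈ R, (∃ c : ℝ, β = c • α) → β = α ∨ β = -α

/-- The density `w(x) = ∏_{α ∈ R} |⟨x,α⟩|^{k(α)}`. -/
def wfun (R : Finset (V N)) (k : V N → ℝ) (x : V N) : ℝ := ∏ α ∈ R, |⟪x, α⟫| ^ (k α)

/-- The measure `dw = w(x) dx`. -/
def dw (R : Finset (V N)) (k : V N → ℝ) : Measure (V N) :=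
  volume.withDensity fun x => ENNReal.ofReal (wfun R k x)

/-- `w(B(x,r))`, the `dw`-measure of the closed ball. -/
def wB (R : Finset (V N)) (k : V N → ℝ) (x : V N) (r : ℝ) : ℝ := (dw R k (closedBall x r)).toReal

/-- The Mehta–Macdonald constant `c_k = ∫ e^{−‖x‖²/2} dw(x)`. -/
def ck (R : Finset (V N)) (k : V N → ℝ) : ℝ := ∫ x, Real.exp (-‖x‖ ^ 2 / 2) ∂(dw R k)

/-- The homogeneous dimension `𝐍 = N + Σ_{α∈R} k(α)`. -/
def NN (R : Finset (V N)) (k : V N → ℝ) : ℝ := N + ∑ α ∈ R, k α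

/-- The reflection group `G` generated by the `σ_α`, `α ∈ R`
(realized as the set of all finite products of such reflections). -/
def Gset (R : Finset (V N)) : Set (V N → V N) :=
  {g | ∃ l : List (V N), (∀ α ∈ l, α ∈ R) ∧ g = l.foldr (fun α h => sigma' α ∘ h) id}

/-- The distance of orbits, `d(x,y) = min_{σ ∈ G} ‖x − σ(y)‖`. -/
def dG (R : Finset (V N)) (x y : V N) : ℝ := sInf {r | ∃ g ∈ Gset R, r = ‖x - g y‖}

/-- The partial derivative `∂_j`. -/
def pd (j : Fin N) (f : V N → ℂ) : V N → ℂ := fun x => fderiv ℝ f x (EuclideanSpace.single j 1)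

/-- The multi-index partial derivative `∂^β = ∂_1^{β_1} ∘ ⋯ ∘ ∂_N^{β_N}`. -/
def pdM (β : Fin N → ℕ) (f : V N → ℂ) : V N → ℂ :=
  (Finset.univ : Finset (Fin N)).toList.foldr (fun j g => (pd j)^[β j] g) f

/-- The Dunkl operator `T_j`. -/
def TDop (R : Finset (V N)) (k : V N → ℝ) (j : Fin N) (f : V N → ℂ) : V N → ℂ := fun x =>
  pd j f x + ∑ α ∈ R, (((k α / 2) * α j : ℝ) : ℂ) * ((f x - f (sigma' α x)) / ((⟪α, x⟫ : ℝ) : ℂ))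

/-- The iterated Dunkl operator `T^β = T_1^{β_1} ∘ ⋯ ∘ T_N^{β_N}`. -/
def TDopM (R : Finset (V N)) (k : V N → ℝ) (β : Fin N → ℕ) (f : V N → ℂ) : V N → ℂ :=
  (Finset.univ : Finset (Fin N)).toList.foldr (fun j g => (TDop R k j)^[β j] g) f

/-- The Dunkl transform `𝓕f(ξ) = c_k^{-1} ∫ f(x) conj(𝐄(ξ,x)) dw(x)`,
for a given Dunkl kernel `Ek (ξ,x) ↦ E(iξ,x)`. -/
def dunklF (R : Finset (V N)) (k : V N → ℝ) (Ek : V N → V N → ℂ) (f : V N → ℂ) (ξ : V N) : ℂ :=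
  ((ck R k : ℝ) : ℂ)⁻¹ * ∫ x, f x * (starRingEnd ℂ) (Ek ξ x) ∂(dw R k)

/-- The Dunkl translation `f(x,y) = τ_x f(−y) = c_k^{-1} ∫ 𝐄(ξ,x) conj(𝐄(ξ,y)) 𝓕f(ξ) dw(ξ)`. -/
def dtrans (R : Finset (V N)) (k : V N → ℝ) (Ek : V N → V N → ℂ) (f : V N → ℂ) (x y : V N) : ℂ :=
  ((ck R k : ℝ) : ℂ)⁻¹ * ∫ ξ, Ek ξ x * (starRingEnd ℂ) (Ek ξ y) * dunklF R k Ek f ξ ∂(dw R k)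

/-- The generalized heat kernel `h_t(x,y) = c_k^{-1} ∫ e^{−t‖ξ‖²} 𝐄(ξ,x) conj(𝐄(ξ,y)) dw(ξ)`. -/
def heat (R : Finset (V N)) (k : V N → ℝ) (Ek : V N → V N → ℂ) (t : ℝ) (x y : V N) : ℂ :=
  ((ck R k : ℝ) : ℂ)⁻¹ *
    ∫ ξ, ((Real.exp (-t * ‖ξ‖ ^ 2) : ℝ) : ℂ) * Ek ξ x * (starRingEnd ℂ) (Ek ξ y) ∂(dw R k)

/-- `𝓕^{-1}f(x,y) := c_k^{-1} ∫ f(ξ) 𝐄(ξ,x) conj(𝐄(ξ,y)) dw(ξ)`. -/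
def Finv (R : Finset (V N)) (k : V N → ℝ) (Ek : V N → V N → ℂ) (f : V N → ℂ) (x y : V N) : ℂ :=
  ((ck R k : ℝ) : ℂ)⁻¹ * ∫ ξ, f ξ * Ek ξ x * (starRingEnd ℂ) (Ek ξ y) ∂(dw R k)

/-- For a finite sequence `𝛂 = (α₁,…,α_m)`, the composition `σ_𝛂 = σ_{α_m}∘⋯∘σ_{α₁}`. -/
def sigmaL (l : List (V N)) (y : V N) : V N := l.foldl (fun z α => sigma' α z) y

/-- `ρ_𝛂(x,y,t) = ∏_{i=0}^{m−1} (1 + ‖x − σ_{α_i}∘⋯∘σ_{α₁}(y)‖/√t)^{−2}`. -/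
def rho : List (V N) → V N → V N → ℝ → ℝ
  | [], _, _, _ => 1
  | α :: l, x, y, t => ((1 + ‖x - y‖ / Real.sqrt t) ^ 2)⁻¹ * rho l x (sigma' α y) t

/-- `𝛂` is admissible for `(x,y)`: `d(x, σ_𝛂(y)) = ‖x − σ_𝛂(y)‖`. -/
def IsAdmissible (R : Finset (V N)) (l : List (V N)) (x y : V N) : Prop :=
  dG R x (sigmaL l y) = ‖x - sigmaL l y‖

/-- `Λ(x,y,t) = Σ_{𝛂 ∈ 𝒜(x,y), ℓ(𝛂) ≤ |G|} ρ_𝛂(x,y,t)`. -/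
def Lam (R : Finset (V N)) (x y : V N) (t : ℝ) : ℝ :=
  ∑' l : {l : List (V N) // (∀ a ∈ l, a ∈ R) ∧ l.length ≤ Nat.card (Gset R) ∧
      IsAdmissible R l x y},
    rho (l : List (V N)) x y t

/-!
Every ball `B(x, s)` contains a ball of radius comparable to `s` on which all `|⟪·, α⟫|` are at
least of order `s`. Passing from a point of that ball to any point of `B(x, r)`, `s ≤ r`, multiplies
each `|⟪·, α⟫|` by at most `O(r / s)`, so averaging gives `w(B(x, r)) ≤ K (r / s)^𝐍 w(B(x, s))`.

Combined with the `L²` estimate at `t = 1 / r`, this bounds `∫_{B(0, r)} |𝐄(ξ, x)|² dw(ξ)` by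
`C r^𝐍 / w(B(x, 1))` for `r ≥ 1`. Summing over dyadic `r` against `(1 + ‖ξ‖)^(-𝐍 - δ)` yields a
weighted `L²` bound `D / w(B(x, 1))`, and since `|𝓕f| ≤ |c_k|⁻¹ ‖f‖₁`, Cauchy–Schwarz in `ξ`
concludes.
-/

section Hyperplanes

lemma exists_nonneg_forall_norm_le {F : Type*} [SeminormedAddCommGroup F] (R : Finset F) :
    ∃ M : ℝ, 0 ≤ M ∧ ∀ α ∈ R, ‖α‖ ≤ M :=
  ⟨∑ α ∈ R, ‖α‖, Finset.sum_nonneg fun _ _ => norm_nonneg _, fun _ hα =>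
    Finset.single_le_sum (f := norm) (fun _ _ => norm_nonneg _) hα⟩

variable {F : Type*} [NormedAddCommGroup F] [InnerProductSpace ℝ F] {R : Finset F}

lemma exists_norm_le_forall_inner_ne_zero (hR : (0 : F) ∉ R) {ε : ℝ} (hε : 0 < ε) :
    ∃ v : F, ‖v‖ ≤ ε ∧ ∀ α ∈ R, ⟪v, α⟫ ≠ 0 := by
  obtain ⟨v, hv⟩ := Module.Dual.exists_forall_ne_zero_of_forall_exists (K := ℝ)
    (fun α : R => innerₗ F (α : F))
    fun α => ⟨α, by simpa using ne_of_mem_of_not_mem α.2 hR⟩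
  have hscale : 0 < ε / (‖v‖ + 1) := by positivity
  refine ⟨(ε / (‖v‖ + 1)) • v, ?_, fun α hα => ?_⟩
  · rw [norm_smul, Real.norm_of_nonneg hscale.le, div_mul_eq_mul_div, div_le_iff₀ (by positivity)]
    gcongr
    linarith
  · rw [real_inner_smul_left, real_inner_comm]
    exact mul_ne_zero hscale.ne' (hv ⟨α, hα⟩)

/-- Pigeonhole: among the `#R + 1` equally spaced points `x + j • v`, each hyperplane `α⊥` comes
within `c` of at most one. -/
lemma exists_le_abs_inner_add_nsmul {v : F} (hv : ∀ α ∈ R, ⟪v, α⟫ ≠ 0) :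
    ∃ c > (0 : ℝ), ∀ x : F, ∃ j ≤ R.card, ∀ α ∈ R, c ≤ |⟪x + j • v, α⟫| := by
  have hsmall : ∀ᶠ c : ℝ in nhdsWithin 0 (Set.Ioi 0), ∀ α ∈ R, c < |⟪v, α⟫| / 2 := by
    refine (Filter.eventually_all_finset R).2 fun α hα => ?_
    exact (eventually_lt_nhds (half_pos (abs_pos.2 (hv α hα)))).filter_mono nhdsWithin_le_nhds
  obtain ⟨c, hc, hc0⟩ := (hsmall.and self_mem_nhdsWithin).exists
  refine ⟨c, hc0, fun x => ?_⟩
  by_contra! hclose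
  choose! a haR ha using hclose
  obtain ⟨i, hi, j, hj, hij, haij⟩ := Finset.exists_ne_map_eq_of_card_lt_of_maps_to
    (s := Finset.range (R.card + 1)) (t := R) (f := a) (by simp)
    fun i hi => haR i (Finset.mem_range_succ_iff.1 hi)
  have hi' := ha i (Finset.mem_range_succ_iff.1 hi)
  have hj' := ha j (Finset.mem_range_succ_iff.1 hj)
  rw [← haij] at hj'
  have hgap : |⟪v, a i⟫| ≤ |⟪x + i • v, a i⟫| + |⟪x + j • v, a i⟫| := by
    have hone : (1 : ℝ) ≤ |(i : ℝ) - j| := by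
      exact_mod_cast Int.one_le_abs (sub_ne_zero.2 (Nat.cast_injective.ne hij))
    calc |⟪v, a i⟫| ≤ |(i : ℝ) - j| * |⟪v, a i⟫| := le_mul_of_one_le_left (abs_nonneg _) hone
      _ = |⟪x + i • v, a i⟫ - ⟪x + j • v, a i⟫| := by
        rw [← abs_mul, ← inner_sub_left, add_sub_add_left_eq_sub, ← Nat.cast_smul_eq_nsmul ℝ,
          ← Nat.cast_smul_eq_nsmul ℝ, ← sub_smul, real_inner_smul_left]
      _ ≤ _ := abs_sub _ _
  linarith [hc _ (haR i (Finset.mem_range_succ_iff.1 hi))]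

lemma exists_norm_le_le_abs_inner_add (hR : (0 : F) ∉ R) {ε : ℝ} (hε : 0 < ε) :
    ∃ c > (0 : ℝ), ∀ x : F, ∃ u : F, ‖u‖ ≤ ε ∧ ∀ α ∈ R, c ≤ |⟪x + u, α⟫| := by
  obtain ⟨v, hvε, hv⟩ :=
    exists_norm_le_forall_inner_ne_zero hR (show 0 < ε / (R.card + 1) by positivity)
  obtain ⟨c, hc, hxc⟩ := exists_le_abs_inner_add_nsmul hv
  refine ⟨c, hc, fun x => ?_⟩
  obtain ⟨j, hj, hjc⟩ := hxc x
  refine ⟨j • v, ?_, hjc⟩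
  calc ‖j • v‖ ≤ j * ‖v‖ := norm_nsmul_le
    _ ≤ (R.card + 1 : ℝ) * (ε / (R.card + 1)) := by
      have : (j : ℝ) ≤ R.card + 1 := by exact_mod_cast hj.trans (Nat.le_succ _)
      gcongr
    _ = ε := by field_simp

lemma exists_closedBall_subset_le_abs_inner (hR : (0 : F) ∉ R) :
    ∃ c > (0 : ℝ), ∀ (x : F) (s : ℝ), 0 < s → ∃ y : F, closedBall y (c * s) ⊆ closedBall x s ∧
      ∀ z ∈ closedBall y (c * s), ∀ α ∈ R, c * s ≤ |⟪z, α⟫| := by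
  obtain ⟨c₀, hc₀, hu⟩ := exists_norm_le_le_abs_inner_add hR one_half_pos
  obtain ⟨M, hM0, hM⟩ := exists_nonneg_forall_norm_le R
  set c : ℝ := min (1 / 2) (c₀ / (1 + M))
  have hc : 0 < c := by positivity
  have hc_half : c ≤ 1 / 2 := min_le_left _ _
  have hcM : c * (1 + M) ≤ c₀ := (le_div_iff₀ (by positivity)).1 (min_le_right _ _)
  refine ⟨c, hc, fun x s hs => ?_⟩
  obtain ⟨u, hu_norm, hu_inner⟩ := hu (s⁻¹ • x)
  refine ⟨x + s • u, ?_, fun z hz α hα => ?_⟩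
  · refine closedBall_subset_closedBall' ?_
    rw [dist_self_add_left, norm_smul, Real.norm_of_nonneg hs.le]
    nlinarith
  · have hcentre : s * c₀ ≤ |⟪x + s • u, α⟫| := by
      have hx : x + s • u = s • (s⁻¹ • x + u) := by rw [smul_add, smul_inv_smul₀ hs.ne']
      rw [hx, real_inner_smul_left, abs_mul, abs_of_pos hs]
      gcongr
      exact hu_inner α hα
    have hmove : |⟪x + s • u, α⟫| - |⟪z, α⟫| ≤ c * s * M := by
      calc |⟪x + s • u, α⟫| - |⟪z, α⟫| ≤ |⟪x + s • u - z, α⟫| := by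
            rw [inner_sub_left]; exact abs_sub_abs_le_abs_sub _ _
        _ ≤ ‖x + s • u - z‖ * ‖α‖ := abs_real_inner_le_norm _ _
        _ ≤ c * s * M := by
          gcongr
          · exact mem_closedBall_iff_norm'.1 hz
          · exact hM α hα
    nlinarith

lemma exists_closedBall_subset_abs_inner_le (hR : (0 : F) ∉ R) :
    ∃ c > (0 : ℝ), ∃ L > (0 : ℝ), ∀ (x : F) (s r : ℝ), 0 < s → s ≤ r →
      ∃ y : F, closedBall y (c * s) ⊆ closedBall x s ∧
        ∀ p ∈ closedBall x r, ∀ z ∈ closedBall y (c * s), ∀ α ∈ R,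
          |⟪p, α⟫| ≤ L * (r / s) * |⟪z, α⟫| := by
  obtain ⟨c, hc, hball⟩ := exists_closedBall_subset_le_abs_inner hR
  obtain ⟨M, hM0, hM⟩ := exists_nonneg_forall_norm_le R
  refine ⟨c, hc, 1 + 2 * M / c, by positivity, fun x s r hs hsr => ?_⟩
  have hr : 0 < r := hs.trans_le hsr
  obtain ⟨y, hyx, hy⟩ := hball x s hs
  refine ⟨y, hyx, fun p hp z hz α hα => ?_⟩
  have hpz : ‖p - z‖ ≤ 2 * r := by
    rw [← dist_eq_norm]
    linarith [dist_triangle_right p z x, mem_closedBall.1 hp, mem_closedBall.1 (hyx hz)]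
  calc |⟪p, α⟫| = |⟪z, α⟫ + ⟪p - z, α⟫| := by rw [← inner_add_left, add_sub_cancel]
    _ ≤ |⟪z, α⟫| + ‖p - z‖ * ‖α‖ :=
      (abs_add_le _ _).trans (by gcongr; exact abs_real_inner_le_norm _ _)
    _ ≤ 1 * |⟪z, α⟫| + 2 * r * M / (c * s) * (c * s) := by
      rw [one_mul, div_mul_cancel₀ _ (by positivity)]
      gcongr
      exact hM α hα
    _ ≤ r / s * |⟪z, α⟫| + 2 * r * M / (c * s) * |⟪z, α⟫| := by
      gcongr
      · exact (one_le_div hs).2 hsr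
      · exact hy z hz α hα
    _ = (1 + 2 * M / c) * (r / s) * |⟪z, α⟫| := by field_simp

end Hyperplanes

section MeasureLemmas

lemma withDensity_mul_le_of_forall_le {X : Type*} [MeasurableSpace X] {μ : Measure X}
    {f : X → ℝ≥0∞} (hf : Measurable f) {A B : Set X} (hA : MeasurableSet A)
    (hB : MeasurableSet B) {C : ℝ≥0∞} (hC : ∀ y ∈ A, ∀ z ∈ B, f y ≤ C * f z) :
    μ.withDensity f A * μ B ≤ C * μ A * μ.withDensity f B := by
  rw [withDensity_apply _ hA, withDensity_apply _ hB]
  have hpoint : ∀ z ∈ B, ∫⁻ y in A, f y ∂μ ≤ C * μ A * f z := fun z hz =>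
    calc ∫⁻ y in A, f y ∂μ ≤ ∫⁻ _ in A, C * f z ∂μ :=
          setLIntegral_mono' hA fun y hy => hC y hy z hz
      _ = C * μ A * f z := by rw [setLIntegral_const, mul_right_comm]
  calc (∫⁻ y in A, f y ∂μ) * μ B = ∫⁻ _ in B, (∫⁻ y in A, f y ∂μ) ∂μ :=
        (setLIntegral_const _ _).symm
    _ ≤ ∫⁻ z in B, C * μ A * f z ∂μ := setLIntegral_mono' hB hpoint
    _ = C * μ A * ∫⁻ z in B, f z ∂μ := lintegral_const_mul _ hf

lemma exists_le_two_pow_one_add_rpow_neg_le {a r : ℝ} (ha : 0 ≤ a) (hr : 0 ≤ r) :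
    ∃ j : ℕ, r ≤ 2 ^ j ∧ (1 + r) ^ (-a) ≤ 2 ^ a * ((2 : ℝ) ^ j) ^ (-a) := by
  obtain ⟨n, hn_le, hn_lt⟩ := exists_nat_pow_near (by linarith : (1 : ℝ) ≤ 1 + r) one_lt_two
  refine ⟨n + 1, by linarith, ?_⟩
  calc (1 + r) ^ (-a) ≤ ((2 : ℝ) ^ n) ^ (-a) :=
        Real.rpow_le_rpow_of_nonpos (by positivity) hn_le (neg_nonpos.2 ha)
    _ = 2 ^ a * ((2 : ℝ) ^ (n + 1)) ^ (-a) := by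
      rw [pow_succ, Real.mul_rpow (by positivity) zero_le_two, mul_left_comm,
        ← Real.rpow_add two_pos, add_neg_cancel, Real.rpow_zero, mul_one]

lemma lintegral_mul_one_add_norm_rpow_neg_le {F : Type*} [SeminormedAddCommGroup F]
    [MeasurableSpace F] [OpensMeasurableSpace F] {μ : Measure F} {h : F → ℝ≥0∞}
    (hh : Measurable h) {d δ : ℝ} (hd : 0 ≤ d + δ) (hδ : 0 < δ) {A : ℝ≥0∞}
    (hA : ∀ r : ℝ, 1 ≤ r → ∫⁻ ξ in closedBall 0 r, h ξ ∂μ ≤ A * ENNReal.ofReal (r ^ d)) :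
    ∫⁻ ξ, h ξ * ENNReal.ofReal ((1 + ‖ξ‖) ^ (-(d + δ))) ∂μ ≤
      A * ENNReal.ofReal (2 ^ (d + δ) * (1 - 2 ^ (-δ))⁻¹) := by
  set a := d + δ
  set coeff : ℕ → ℝ := fun j => 2 ^ a * ((2 : ℝ) ^ j) ^ (-a)
  have hq : (2 : ℝ) ^ (-δ) < 1 := Real.rpow_lt_one_of_one_lt_of_neg one_lt_two (by linarith)
  have hq0 : (0 : ℝ) ≤ 2 ^ (-δ) := by positivity
  have hcoeff : ∀ j, coeff j * ((2 : ℝ) ^ j) ^ d = 2 ^ a * ((2 : ℝ) ^ (-δ)) ^ j := fun j => by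
    rw [mul_assoc, ← Real.rpow_add (by positivity), Real.rpow_pow_comm zero_le_two]
    congr 3
    ring
  calc ∫⁻ ξ, h ξ * ENNReal.ofReal ((1 + ‖ξ‖) ^ (-a)) ∂μ
      ≤ ∫⁻ ξ, ∑' j : ℕ, (closedBall 0 (2 ^ j)).indicator
          (fun ξ => ENNReal.ofReal (coeff j) * h ξ) ξ ∂μ := by
        refine lintegral_mono fun ξ => ?_
        obtain ⟨j, hξj, hj⟩ := exists_le_two_pow_one_add_rpow_neg_le hd (norm_nonneg ξ)
        refine le_trans ?_ (ENNReal.le_tsum j)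
        rw [Set.indicator_of_mem (by simpa using hξj), mul_comm]
        gcongr
    _ = ∑' j : ℕ, ENNReal.ofReal (coeff j) * ∫⁻ ξ in closedBall 0 (2 ^ j), h ξ ∂μ := by
        rw [lintegral_tsum fun j =>
          ((hh.const_mul _).indicator measurableSet_closedBall).aemeasurable]
        simp_rw [lintegral_indicator measurableSet_closedBall, lintegral_const_mul _ hh]
    _ ≤ ∑' j : ℕ, A * ENNReal.ofReal (2 ^ a * ((2 : ℝ) ^ (-δ)) ^ j) := by
        refine ENNReal.tsum_le_tsum fun j => ?_
        grw [hA _ (one_le_pow₀ one_le_two)]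
        rw [mul_left_comm, ← ENNReal.ofReal_mul (by positivity), hcoeff]
    _ = A * ENNReal.ofReal (2 ^ a * (1 - 2 ^ (-δ))⁻¹) := by
        rw [ENNReal.tsum_mul_left, ← ENNReal.ofReal_tsum_of_nonneg (fun j => by positivity)
          ((summable_geometric_of_lt_one hq0 hq).mul_left _), tsum_mul_left,
          tsum_geometric_of_lt_one hq0 hq]

lemma enorm_integral_mul_le_of_enorm_le {X 𝕜 : Type*} [MeasurableSpace X] [RCLike 𝕜]
    {μ : Measure X} {m F G : X → 𝕜} {φ : X → ℝ≥0∞} (hF : AEStronglyMeasurable F μ)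
    (hG : AEStronglyMeasurable G μ) (hφ : AEMeasurable φ μ) {C : ℝ≥0∞}
    (hm : ∀ ξ, ‖m ξ‖ₑ ≤ C * φ ξ) :
    ‖∫ ξ, m ξ * F ξ * G ξ ∂μ‖ₑ ≤ C * ((∫⁻ ξ, ‖F ξ‖ₑ ^ 2 * φ ξ ∂μ) ^ (1 / 2 : ℝ) *
      (∫⁻ ξ, ‖G ξ‖ₑ ^ 2 * φ ξ ∂μ) ^ (1 / 2 : ℝ)) := by
  have hsqrt : ∀ t : ℝ≥0∞, t ^ (1 / 2 : ℝ) * t ^ (1 / 2 : ℝ) = t := fun t => by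
    rw [← ENNReal.rpow_add_of_nonneg _ _ one_half_pos.le one_half_pos.le, add_halves,
      ENNReal.rpow_one]
  have hsq : ∀ H : X → 𝕜, ∀ ξ, (‖H ξ‖ₑ * φ ξ ^ (1 / 2 : ℝ)) ^ (2 : ℝ) = ‖H ξ‖ₑ ^ 2 * φ ξ :=
    fun H ξ => by rw [ENNReal.rpow_two, mul_pow, sq (φ ξ ^ (1 / 2 : ℝ)), hsqrt]
  have hmeas : ∀ H : X → 𝕜, AEStronglyMeasurable H μ →
      AEMeasurable (fun ξ => ‖H ξ‖ₑ * φ ξ ^ (1 / 2 : ℝ)) μ :=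
    fun H hH => hH.enorm.mul (hφ.pow_const _)
  calc ‖∫ ξ, m ξ * F ξ * G ξ ∂μ‖ₑ ≤ ∫⁻ ξ, ‖m ξ * F ξ * G ξ‖ₑ ∂μ :=
        enorm_integral_le_lintegral_enorm _
    _ ≤ ∫⁻ ξ, C * ((‖F ξ‖ₑ * φ ξ ^ (1 / 2 : ℝ)) * (‖G ξ‖ₑ * φ ξ ^ (1 / 2 : ℝ))) ∂μ := by
        refine lintegral_mono fun ξ => ?_
        rw [mul_mul_mul_comm, hsqrt, enorm_mul, enorm_mul, mul_comm (_ * _) (φ ξ), mul_assoc,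
          ← mul_assoc C]
        gcongr
        exact hm ξ
    _ = C * ∫⁻ ξ, (‖F ξ‖ₑ * φ ξ ^ (1 / 2 : ℝ)) * (‖G ξ‖ₑ * φ ξ ^ (1 / 2 : ℝ)) ∂μ :=
        lintegral_const_mul'' _ ((hmeas F hF).mul (hmeas G hG))
    _ ≤ _ := by
        gcongr
        simpa only [Pi.mul_apply, hsq] using ENNReal.lintegral_mul_le_Lp_mul_Lq μ
          Real.HolderConjugate.two_two (hmeas F hF) (hmeas G hG)

end MeasureLemmas

section Weight

variable {R : Finset (V N)} {k : V N → ℝ}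

lemma NN_nonneg (hk : ∀ α ∈ R, 0 ≤ k α) : 0 ≤ NN R k :=
  add_nonneg N.cast_nonneg (Finset.sum_nonneg hk)

lemma continuous_wfun (hk : ∀ α ∈ R, 0 ≤ k α) : Continuous (wfun R k) :=
  continuous_finsetProd _ fun α hα =>
    (by fun_prop : Continuous fun x : V N => |⟪x, α⟫|).rpow_const fun _ => Or.inr (hk α hα)

lemma isLocallyFiniteMeasure_dw (hk : ∀ α ∈ R, 0 ≤ k α) : IsLocallyFiniteMeasure (dw R k) :=
  IsLocallyFiniteMeasure.withDensity_ofReal (continuous_wfun hk)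

lemma wfun_le_rpow_mul_wfun (hk : ∀ α ∈ R, 0 ≤ k α) {C : ℝ} (hC : 0 ≤ C) {y z : V N}
    (hyz : ∀ α ∈ R, |⟪y, α⟫| ≤ C * |⟪z, α⟫|) :
    wfun R k y ≤ C ^ (∑ α ∈ R, k α) * wfun R k z := by
  rw [wfun, wfun, Real.rpow_sum_of_nonneg hC hk, ← Finset.prod_mul_distrib]
  refine Finset.prod_le_prod (fun α _ => by positivity) fun α hα => ?_
  rw [← Real.mul_rpow hC (abs_nonneg _)]
  exact Real.rpow_le_rpow (abs_nonneg _) (hyz α hα) (hk α hα)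

lemma wB_pos (hR : 0 ∉ R) (hk : ∀ α ∈ R, 0 ≤ k α) (x : V N) {s : ℝ} (hs : 0 < s) :
    0 < wB R k x s := by
  have := isLocallyFiniteMeasure_dw hk
  obtain ⟨c, hc, hball⟩ := exists_closedBall_subset_le_abs_inner hR
  obtain ⟨y, hyx, hy⟩ := hball x s hs
  have hwpos : closedBall y (c * s) ⊆
      Function.support (fun z => ENNReal.ofReal (wfun R k z)) ∩ closedBall x s := fun z hz => by
    refine ⟨(ENNReal.ofReal_pos.2 (Finset.prod_pos fun α hα => ?_)).ne', hyx hz⟩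
    exact Real.rpow_pos_of_pos ((mul_pos hc hs).trans_le (hy z hz α hα)) _
  refine ENNReal.toReal_pos (ne_of_gt ?_) measure_closedBall_lt_top.ne
  rw [dw, withDensity_apply _ measurableSet_closedBall,
    setLIntegral_pos_iff (continuous_wfun hk).measurable.ennreal_ofReal]
  exact (measure_closedBall_pos _ _ (mul_pos hc hs)).trans_le (measure_mono hwpos)

lemma wB_mul_volume_real_le (hk : ∀ α ∈ R, 0 ≤ k α) {C : ℝ} (hC : 0 ≤ C) {x y : V N} {r s : ℝ}
    (h : ∀ p ∈ closedBall x r, ∀ z ∈ closedBall y s, ∀ α ∈ R, |⟪p, α⟫| ≤ C * |⟪z, α⟫|) :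
    wB R k x r * volume.real (closedBall y s) ≤
      C ^ (∑ α ∈ R, k α) * volume.real (closedBall x r) * wB R k y s := by
  have := isLocallyFiniteMeasure_dw hk
  have hle := withDensity_mul_le_of_forall_le (μ := volume) (C := .ofReal (C ^ ∑ α ∈ R, k α))
    (continuous_wfun hk).measurable.ennreal_ofReal (measurableSet_closedBall (x := x) (ε := r))
    (measurableSet_closedBall (x := y) (ε := s)) fun p hp z hz => by
      rw [← ENNReal.ofReal_mul (by positivity)]
      exact ENNReal.ofReal_le_ofReal (wfun_le_rpow_mul_wfun hk hC (h p hp z hz))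
  have hfin : ENNReal.ofReal (C ^ ∑ α ∈ R, k α) * volume (closedBall x r) *
      dw R k (closedBall y s) ≠ ⊤ :=
    ENNReal.mul_ne_top (ENNReal.mul_ne_top ENNReal.ofReal_ne_top measure_closedBall_lt_top.ne)
      measure_closedBall_lt_top.ne
  have hreal := ENNReal.toReal_mono hfin hle
  rwa [ENNReal.toReal_mul, ENNReal.toReal_mul, ENNReal.toReal_mul,
    ENNReal.toReal_ofReal (by positivity)] at hreal

lemma exists_wB_le_mul_div_rpow_mul_wB (hR : 0 ∉ R) (hk : ∀ α ∈ R, 0 ≤ k α) :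
    ∃ K > (0 : ℝ), ∀ (x : V N) (s r : ℝ), 0 < s → s ≤ r →
      wB R k x r ≤ K * (r / s) ^ NN R k * wB R k x s := by
  have := isLocallyFiniteMeasure_dw hk
  obtain ⟨c, hc, L, hL, hball⟩ := exists_closedBall_subset_abs_inner_le hR
  refine ⟨L ^ (∑ α ∈ R, k α) / c ^ N, by positivity, fun x s r hs hsr => ?_⟩
  have hr : 0 < r := hs.trans_le hsr
  obtain ⟨y, hyx, hinner⟩ := hball x s r hs hsr
  have hmono : wB R k y (c * s) ≤ wB R k x s :=
    ENNReal.toReal_mono measure_closedBall_lt_top.ne (measure_mono hyx)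
  have hvol := wB_mul_volume_real_le hk (by positivity) hinner
  rw [Measure.addHaar_real_closedBall _ _ hr.le,
    Measure.addHaar_real_closedBall _ _ (by positivity), finrank_euclideanSpace_fin,
    Real.mul_rpow hL.le (by positivity)] at hvol
  set v : ℝ := volume.real (ball (0 : V N) 1)
  have hv : 0 < v := ENNReal.toReal_pos (measure_ball_pos _ _ one_pos).ne' measure_ball_lt_top.ne
  refine le_of_mul_le_mul_right (hvol.trans ?_) (by positivity : 0 < (c * s) ^ N * v)
  calc L ^ (∑ α ∈ R, k α) * (r / s) ^ (∑ α ∈ R, k α) * (r ^ N * v) * wB R k y (c * s)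
      ≤ L ^ (∑ α ∈ R, k α) * (r / s) ^ (∑ α ∈ R, k α) * (r ^ N * v) * wB R k x s := by gcongr
    _ = L ^ (∑ α ∈ R, k α) / c ^ N * (r / s) ^ NN R k * wB R k x s * ((c * s) ^ N * v) := by
      rw [NN, Real.rpow_add (by positivity), Real.rpow_natCast, div_pow, mul_pow]
      field_simp

end Weight

section Kernel

variable {R : Finset (V N)} {k : V N → ℝ} {C_E δ : ℝ}

lemma exists_setLIntegral_enorm_sq_le (hR : 0 ∉ R) (hk : ∀ α ∈ R, 0 ≤ k α)
    (hCE : 0 < C_E) :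
    ∃ K > (0 : ℝ), ∀ (x : V N) (e : V N → ℂ), Continuous e →
      (∀ t : ℝ, 0 < t →
        ∫ ξ in closedBall (0 : V N) (1 / t), ‖e ξ‖ ^ 2 ∂(dw R k) ≤ C_E / wB R k x t) →
      ∀ r : ℝ, 1 ≤ r → ∫⁻ ξ in closedBall (0 : V N) r, ‖e ξ‖ₑ ^ 2 ∂(dw R k) ≤
        ENNReal.ofReal (K / wB R k x 1) * ENNReal.ofReal (r ^ NN R k) := by
  have := isLocallyFiniteMeasure_dw hk
  obtain ⟨K, hK, hgrowth⟩ := exists_wB_le_mul_div_rpow_mul_wB hR hk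
  refine ⟨C_E * K, by positivity, fun x e he hL2 r hr => ?_⟩
  have hr0 : 0 < r := one_pos.trans_le hr
  have hw1 := wB_pos hR hk x one_pos
  have hwr := wB_pos hR hk x (inv_pos.2 hr0)
  have hshrink : wB R k x 1 ≤ K * r ^ NN R k * wB R k x r⁻¹ := by
    simpa using hgrowth x r⁻¹ 1 (inv_pos.2 hr0) (inv_le_one_of_one_le₀ hr)
  have hint : IntegrableOn (fun ξ => ‖e ξ‖ ^ 2) (closedBall 0 r) (dw R k) :=
    (he.norm.pow 2).continuousOn.integrableOn_compact (isCompact_closedBall _ _)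
  have hbound : ∫ ξ in closedBall (0 : V N) r, ‖e ξ‖ ^ 2 ∂(dw R k) ≤
      C_E * K / wB R k x 1 * r ^ NN R k :=
    calc ∫ ξ in closedBall (0 : V N) r, ‖e ξ‖ ^ 2 ∂(dw R k) ≤ C_E / wB R k x r⁻¹ := by
          simpa using hL2 r⁻¹ (inv_pos.2 hr0)
      _ ≤ C_E * K / wB R k x 1 * r ^ NN R k := by
        rw [div_mul_eq_mul_div, div_le_div_iff₀ hwr hw1, mul_assoc, mul_assoc, ← mul_assoc K]
        gcongr
  calc ∫⁻ ξ in closedBall (0 : V N) r, ‖e ξ‖ₑ ^ 2 ∂(dw R k)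
      = ENNReal.ofReal (∫ ξ in closedBall (0 : V N) r, ‖e ξ‖ ^ 2 ∂(dw R k)) := by
        rw [ofReal_integral_eq_lintegral_ofReal hint (ae_of_all _ fun _ => sq_nonneg _)]
        simp only [ENNReal.ofReal_pow (norm_nonneg _), ofReal_norm]
    _ ≤ ENNReal.ofReal (C_E * K / wB R k x 1) * ENNReal.ofReal (r ^ NN R k) := by
        rw [← ENNReal.ofReal_mul (by positivity)]
        exact ENNReal.ofReal_le_ofReal hbound

lemma exists_lintegral_enorm_sq_mul_le (hR : 0 ∉ R) (hk : ∀ α ∈ R, 0 ≤ k α)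
    (hCE : 0 < C_E) (hδ : 0 < δ) :
    ∃ D > (0 : ℝ), ∀ (x : V N) (e : V N → ℂ), Continuous e →
      (∀ t : ℝ, 0 < t →
        ∫ ξ in closedBall (0 : V N) (1 / t), ‖e ξ‖ ^ 2 ∂(dw R k) ≤ C_E / wB R k x t) →
      ∫⁻ ξ, ‖e ξ‖ₑ ^ 2 * ENNReal.ofReal ((1 + ‖ξ‖) ^ (-(NN R k + δ))) ∂(dw R k) ≤
        ENNReal.ofReal (D / wB R k x 1) := by
  obtain ⟨K, hK, hball⟩ := exists_setLIntegral_enorm_sq_le hR hk hCE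
  have hgeom : 0 < (1 - (2 : ℝ) ^ (-δ))⁻¹ :=
    inv_pos.2 (sub_pos.2 (Real.rpow_lt_one_of_one_lt_of_neg one_lt_two (neg_lt_zero.2 hδ)))
  refine ⟨K * (2 ^ (NN R k + δ) * (1 - 2 ^ (-δ))⁻¹), by positivity, fun x e he hL2 => ?_⟩
  have hw1 := wB_pos hR hk x one_pos
  have hdyadic := lintegral_mul_one_add_norm_rpow_neg_le (he.measurable.enorm.pow_const 2)
    (add_nonneg (NN_nonneg hk) hδ.le) hδ (hball x e he hL2)
  rwa [← ENNReal.ofReal_mul (by positivity), div_mul_eq_mul_div] at hdyadic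

variable {Ek : V N → V N → ℂ}

lemma exists_norm_Finv_le (hR : 0 ∉ R) (hk : ∀ α ∈ R, 0 ≤ k α) (hCE : 0 < C_E)
    (hδ : 0 < δ) (hEc : ∀ x : V N, Continuous fun ξ => Ek ξ x)
    (hE2 : ∀ t : ℝ, 0 < t → ∀ y : V N,
      (∫ ξ in closedBall (0 : V N) (1 / t), ‖Ek ξ y‖ ^ 2 ∂(dw R k)) ≤ C_E / wB R k y t) :
    ∃ D > (0 : ℝ), ∀ (m : V N → ℂ) (M : ℝ), 0 ≤ M →
      (∀ ξ, ‖m ξ‖ ≤ M * (1 + ‖ξ‖) ^ (-(NN R k + δ))) → ∀ x y : V N,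
        ‖Finv R k Ek m x y‖ ≤ |ck R k|⁻¹ *
          (M * D * wB R k x 1 ^ (-(1 / 2 : ℝ)) * wB R k y 1 ^ (-(1 / 2 : ℝ))) := by
  obtain ⟨D, hD, hweighted⟩ := exists_lintegral_enorm_sq_mul_le hR hk hCE hδ
  refine ⟨D, hD, fun m M hM hm x y => ?_⟩
  have hsqrt : ∀ z : V N, (∫⁻ ξ, ‖Ek ξ z‖ₑ ^ 2 *
      ENNReal.ofReal ((1 + ‖ξ‖) ^ (-(NN R k + δ))) ∂(dw R k)) ^ (1 / 2 : ℝ) ≤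
        ENNReal.ofReal (D ^ (1 / 2 : ℝ) * wB R k z 1 ^ (-(1 / 2 : ℝ))) := fun z => by
    have hw1 := wB_pos hR hk z one_pos
    grw [hweighted z _ (hEc z) fun t ht => hE2 t ht z]
    rw [ENNReal.ofReal_rpow_of_nonneg (by positivity) (by positivity),
      Real.div_rpow hD.le hw1.le, Real.rpow_neg hw1.le, div_eq_mul_inv]
  have hCS := enorm_integral_mul_le_of_enorm_le (μ := dw R k) (C := ENNReal.ofReal M)
    (G := fun ξ => starRingEnd ℂ (Ek ξ y))
    (φ := fun ξ => ENNReal.ofReal ((1 + ‖ξ‖) ^ (-(NN R k + δ))))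
    (hEc x).aestronglyMeasurable
    (Complex.continuous_conj.comp (hEc y)).aestronglyMeasurable (by fun_prop) fun ξ => by
      rw [← ENNReal.ofReal_mul hM, ← ofReal_norm]
      exact ENNReal.ofReal_le_ofReal (hm ξ)
  simp only [RCLike.enorm_conj] at hCS
  have hwx := wB_pos hR hk x one_pos
  have hwy := wB_pos hR hk y one_pos
  grw [hsqrt x, hsqrt y, ← ENNReal.ofReal_mul (by positivity), ← ENNReal.ofReal_mul hM,
    ← ofReal_norm, ENNReal.ofReal_le_ofReal_iff (by positivity)] at hCS
  have hDD : D ^ (1 / 2 : ℝ) * D ^ (1 / 2 : ℝ) = D := by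
    rw [← Real.rpow_add hD, add_halves, Real.rpow_one]
  rw [Finv, norm_mul, norm_inv, Complex.norm_real, Real.norm_eq_abs]
  refine mul_le_mul_of_nonneg_left (hCS.trans_eq ?_) (by positivity)
  linear_combination M * wB R k x 1 ^ (-(1 / 2 : ℝ)) * wB R k y 1 ^ (-(1 / 2 : ℝ)) * hDD

lemma norm_dunklF_le {f : V N → ℂ} (hf : Integrable f (dw R k)) {ξ : V N}
    (hE : ∀ x, ‖Ek ξ x‖ ≤ 1) :
    ‖dunklF R k Ek f ξ‖ ≤ |ck R k|⁻¹ * ∫ z, ‖f z‖ ∂(dw R k) := by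
  rw [dunklF, norm_mul, norm_inv, Complex.norm_real, Real.norm_eq_abs]
  gcongr
  refine norm_integral_le_of_norm_le hf.norm (ae_of_all _ fun z => ?_)
  rw [norm_mul, RCLike.norm_conj]
  exact mul_le_of_le_one_right (norm_nonneg _) (hE z)

lemma pdM_zero (f : V N → ℂ) : pdM 0 f = f := by
  simp [pdM]

theorem statement7_general (hR : 0 ∉ R) (hk : ∀ α ∈ R, 0 ≤ k α)
    (hEc : ∀ x : V N, Continuous fun ξ => Ek ξ x) (hE1 : ∀ ξ x : V N, ‖Ek ξ x‖ ≤ 1)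
    (hδ : 0 < δ) (hCE : 0 < C_E)
    (hE2 : ∀ t : ℝ, 0 < t → ∀ y : V N,
      (∫ ξ in closedBall (0 : V N) (1 / t), ‖Ek ξ y‖ ^ 2 ∂(dw R k)) ≤ C_E / wB R k y t) :
    ∃ C₁ > (0 : ℝ), ∀ f g : V N → ℂ, Integrable f (dw R k) → Integrable g (dw R k) →
      (∀ ξ : V N, ‖dunklF R k Ek g ξ‖ ≤ (1 + ‖ξ‖) ^ (-(NN R k + δ))) →
      ∀ x y : V N,
        ‖((ck R k : ℝ) : ℂ)⁻¹ * ∫ ξ, Ek ξ x * (starRingEnd ℂ) (Ek ξ y) *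
            dunklF R k Ek f ξ * dunklF R k Ek g ξ ∂(dw R k)‖ ≤
          C₁ * wB R k x 1 ^ (-(1 / 2 : ℝ)) * wB R k y 1 ^ (-(1 / 2 : ℝ)) *
            ∫ z, ‖f z‖ ∂(dw R k) := by
  obtain ⟨D, hD, hFinv⟩ := exists_norm_Finv_le hR hk hCE hδ hEc hE2
  refine ⟨(|ck R k|⁻¹ ^ 2 + 1) * D, by positivity, fun f g hf _ hg x y => ?_⟩
  have hwx := wB_pos hR hk x one_pos
  have hwy := wB_pos hR hk y one_pos
  set I : ℝ := ∫ z, ‖f z‖ ∂(dw R k)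
  have hfg : ∀ ξ, ‖dunklF R k Ek f ξ * dunklF R k Ek g ξ‖ ≤
      |ck R k|⁻¹ * I * (1 + ‖ξ‖) ^ (-(NN R k + δ)) := fun ξ => by
    rw [norm_mul]
    gcongr
    exacts [norm_dunklF_le hf (hE1 ξ), hg ξ]
  calc _ = ‖Finv R k Ek (fun ξ => dunklF R k Ek f ξ * dunklF R k Ek g ξ) x y‖ := by
        simp only [Finv, mul_comm, mul_left_comm, mul_assoc]
    _ ≤ _ := hFinv _ _ (by positivity) hfg x y
    _ = |ck R k|⁻¹ ^ 2 * D * wB R k x 1 ^ (-(1 / 2 : ℝ)) * wB R k y 1 ^ (-(1 / 2 : ℝ)) * I := by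
      ring
    _ ≤ _ := by gcongr; linarith

end Kernel

/-- the basic bound `|(f∗g)(x,y)| ≤ C₁ w(B(x,1))^{−1/2} w(B(y,1))^{−1/2}‖f‖₁`. -/
theorem statement7 (N : ℕ) (R : Finset (V N)) (k : V N → ℝ)
    (hR : IsNRS R) (hk : ∀ α ∈ R, 0 < k α)
    (hkG : ∀ α ∈ R, ∀ β ∈ R, k (sigma' α β) = k β)
    (Ek : V N → V N → ℂ)
    (hEsm : ∀ x : V N, ContDiff ℝ (⊤ : ℕ∞) fun ξ => Ek ξ x)
    (hEb : ∀ (x : V N) (β : Fin N → ℕ) (ξ : V N),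
      ‖pdM β (fun ξ' => Ek ξ' x) ξ‖ ≤ ‖x‖ ^ (∑ j, β j))
    (hEconj : ∀ ξ x : V N, Ek (-ξ) x = (starRingEnd ℂ) (Ek ξ x))
    (δ : ℝ) (hδ : 0 < δ)
    (C_E : ℝ) (hCE : 0 < C_E)
    (hE2 : ∀ t : ℝ, 0 < t → ∀ y : V N,
      (∫ ξ in closedBall (0 : V N) (1 / t), ‖Ek ξ y‖ ^ 2 ∂(dw R k)) ≤ C_E / wB R k y t) :
    ∃ C₁ > (0 : ℝ), ∀ f g : V N → ℂ, Integrable f (dw R k) → Integrable g (dw R k) →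
      (∀ ξ : V N, ‖dunklF R k Ek g ξ‖ ≤ (1 + ‖ξ‖) ^ (-(NN R k + δ))) →
      ∀ x y : V N,
        ‖((ck R k : ℝ) : ℂ)⁻¹ * ∫ ξ, Ek ξ x * (starRingEnd ℂ) (Ek ξ y) *
            dunklF R k Ek f ξ * dunklF R k Ek g ξ ∂(dw R k)‖ ≤
          C₁ * wB R k x 1 ^ (-(1 / 2 : ℝ)) * wB R k y 1 ^ (-(1 / 2 : ℝ)) *
            ∫ z, ‖f z‖ ∂(dw R k) := by
  exact statement7_general hR.ne_zero (fun α hα => (hk α hα).le) (fun x => (hEsm x).continuous)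
    (fun ξ x => by simpa [pdM_zero] using hEb x 0 ξ) hδ hCE hE2
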